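/- Let ν ≥ 1 be an integer and (M_k)_{k∈ℕ} a sequence of positive reals satisfying (M.0), (M.2) with constants A ≥ 1, H ≥ 1 and (G), with associated function M(r) := sup_{k∈ℕ} log(r^{νk}/M_{νk}). Let (λ_l)_{l≥1} be positive reals with λ_l ≥ λ₁ > 0 for all l and ∑_{l≥1} λ_l^{−p₀} < ∞ for some p₀ ∈ ℕ, and let (b_l)_{l≥1} be nonnegative reals. Then the following are equivalent: (a) there exists L > 0 such that ∑_{l≥1} exp(−M(L·λ_l^{1/ν}))·b_l < ∞; (b) there exist L > 0 and K > 0 such that b_l ≤ K·exp(M(L·λ_l^{1/ν})) for all l ≥ 1. -/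

import Mathlib

/-- The associated function `M(r) = sup_{k ∈ ℕ} log ( r^{νk} / M_{νk} )`. -/
noncomputable def assocM (ν : ℕ) (Mk : ℕ → ℝ) (r : ℝ) : ℝ :=
  ⨆ k : ℕ, Real.log (r ^ (ν * k) / Mk (ν * k))

theorem assocM_bdd (ν : ℕ) (Mk : ℕ → ℝ) (hMpos : ∀ k, 0 < Mk k)
    (hG : ∃ C₀ > (0 : ℝ), ∃ l > (0 : ℝ), ∀ k : ℕ, (k.factorial : ℝ) ≤ C₀ * l ^ k * Mk k)
    (r : ℝ) (hr : 0 < r) :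
    BddAbove (Set.range fun k : ℕ => Real.log (r ^ (ν * k) / Mk (ν * k))) := by
  obtain ⟨C, hC, l, hl, h⟩ := hG
  refine ⟨Real.log (C * Real.exp (l * r)), ?_⟩
  rintro _ ⟨k, rfl⟩
  have hM := hMpos (ν * k)
  have hk := h (ν * k)
  have hf : (0 : ℝ) < ((ν * k).factorial : ℝ) := by exact_mod_cast Nat.factorial_pos _
  refine Real.log_le_log (by positivity) ?_
  have h1 := Real.pow_div_factorial_le_exp (l * r) (by positivity) (ν * k)
  refine le_trans ?_ (mul_le_mul_of_nonneg_left h1 hC.le)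
  rw [← mul_div_assoc, div_le_div_iff₀ hM hf, mul_pow]
  have := mul_le_mul_of_nonneg_left hk (pow_pos hr (ν * k)).le
  linarith

theorem le_assocM (ν : ℕ) (Mk : ℕ → ℝ) (hMpos : ∀ k, 0 < Mk k)
    (hG : ∃ C₀ > (0 : ℝ), ∃ l > (0 : ℝ), ∀ k : ℕ, (k.factorial : ℝ) ≤ C₀ * l ^ k * Mk k)
    (r : ℝ) (hr : 0 < r) (k : ℕ) :
    Real.log (r ^ (ν * k) / Mk (ν * k)) ≤ assocM ν Mk r :=
  le_ciSup (assocM_bdd ν Mk hMpos hG r hr) k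

theorem assocM_two (ν : ℕ) (Mk : ℕ → ℝ) (hMpos : ∀ k, 0 < Mk k)
    (A H : ℝ) (hA : 1 ≤ A) (hH : 1 ≤ H)
    (hM2 : ∀ k : ℕ, Mk (2 * k) ≤ A * H ^ (2 * k) * Mk k ^ 2)
    (hG : ∃ C₀ > (0 : ℝ), ∃ l > (0 : ℝ), ∀ k : ℕ, (k.factorial : ℝ) ≤ C₀ * l ^ k * Mk k)
    (r : ℝ) (hr : 0 < r) :
    2 * assocM ν Mk r ≤ Real.log A + assocM ν Mk (H * r) := by
  have hA0 : 0 < A := by linarith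
  have hH0 : 0 < H := by linarith
  suffices h : assocM ν Mk r ≤ (Real.log A + assocM ν Mk (H * r)) / 2 by linarith
  refine ciSup_le fun k => ?_
  have h1 := le_assocM ν Mk hMpos hG (H * r) (by positivity) (2 * k)
  have hm := hM2 (ν * k)
  have e : ν * (2 * k) = 2 * (ν * k) := by ring
  rw [e] at h1
  have p1 := hMpos (ν * k)
  have p2 := hMpos (2 * (ν * k))
  have h2 : 2 * Real.log (r ^ (ν * k) / Mk (ν * k)) ≤
      Real.log A + Real.log ((H * r) ^ (2 * (ν * k)) / Mk (2 * (ν * k))) := by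
    rw [← Real.log_mul (by positivity) (by positivity)]
    have : 2 * Real.log (r ^ (ν * k) / Mk (ν * k)) =
        Real.log ((r ^ (ν * k) / Mk (ν * k)) ^ 2) := by
      rw [Real.log_pow]; norm_num
    rw [this]
    refine Real.log_le_log (by positivity) ?_
    rw [div_pow, ← mul_div_assoc, div_le_div_iff₀ (by positivity) p2, mul_pow, ← pow_mul,
      mul_comm (ν * k) 2]
    have := mul_le_mul_of_nonneg_left hm (pow_pos hr (2 * (ν * k))).le
    linarith
  linarith

theorem stmt_17 (ν : ℕ) (hν : 1 ≤ ν) (Mk : ℕ → ℝ) (hMpos : ∀ k, 0 < Mk k)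
    (hM0 : Mk 0 = 1)
    (A H : ℝ) (hA : 1 ≤ A) (hH : 1 ≤ H)
    (hM2 : ∀ k : ℕ, Mk (2 * k) ≤ A * H ^ (2 * k) * Mk k ^ 2)
    (hG : ∃ C₀ > (0 : ℝ), ∃ l > (0 : ℝ), ∀ k : ℕ, (k.factorial : ℝ) ≤ C₀ * l ^ k * Mk k)
    (lam : ℕ → ℝ) (hlam : ∀ l, 0 < lam l) (hlb : ∀ l, lam 0 ≤ lam l)
    (p₀ : ℕ) (hp₀ : Summable (fun l => 1 / lam l ^ p₀))
    (b : ℕ → ℝ) (hb : ∀ l, 0 ≤ b l) :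
    (∃ L > (0 : ℝ),
        Summable (fun l => Real.exp (-(assocM ν Mk (L * lam l ^ (1 / (ν : ℝ))))) * b l)) ↔
    (∃ L > (0 : ℝ), ∃ K > (0 : ℝ), ∀ l,
        b l ≤ K * Real.exp (assocM ν Mk (L * lam l ^ (1 / (ν : ℝ))))) := by
  constructor
  · rintro ⟨L, hL, hs⟩
    have hn : ∀ l, 0 ≤ Real.exp (-(assocM ν Mk (L * lam l ^ (1 / (ν : ℝ))))) * b l :=
      fun l => mul_nonneg (Real.exp_pos _).le (hb l)
    obtain ⟨S, hS⟩ : ∃ S, S = ∑' l, Real.exp (-(assocM ν Mk (L * lam l ^ (1 / (ν : ℝ))))) * b l :=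
      ⟨_, rfl⟩
    have hS0 : 0 ≤ S := hS ▸ tsum_nonneg hn
    refine ⟨L, hL, S + 1, by linarith, fun l => ?_⟩
    have h1 := hs.le_tsum l (fun j _ => hn j)
    rw [← hS, Real.exp_neg, inv_mul_eq_div, div_le_iff₀ (Real.exp_pos _)] at h1
    exact h1.trans (mul_le_mul_of_nonneg_right (by linarith) (Real.exp_pos _).le)
  · rintro ⟨L, hL, K, hK, h⟩
    have hA0 : 0 < A := by linarith
    have hH0 : 0 < H := by linarith
    refine ⟨H * L, by positivity, ?_⟩
    refine Summable.of_nonneg_of_le (fun l => mul_nonneg (Real.exp_pos _).le (hb l)) (fun l => ?_)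
      (hp₀.mul_left (K * A * (Mk (ν * p₀) / L ^ (ν * p₀))))
    have hl := hlam l
    have hr : 0 < L * lam l ^ (1 / (ν : ℝ)) := by positivity
    have hpow : (L * lam l ^ (1 / (ν : ℝ))) ^ (ν * p₀) = L ^ (ν * p₀) * lam l ^ p₀ := by
      rw [mul_pow]
      congr 1
      rw [pow_mul, one_div, Real.rpow_inv_natCast_pow hl.le (by omega)]
    have h1 := le_assocM ν Mk hMpos hG _ hr p₀
    have h2 := assocM_two ν Mk hMpos A H hA hH hM2 hG _ hr
    have h3 := h l
    rw [hpow] at h1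
    rw [mul_assoc H L]
    generalize assocM ν Mk (H * (L * lam l ^ (1 / (ν : ℝ)))) = y at *
    generalize assocM ν Mk (L * lam l ^ (1 / (ν : ℝ))) = x at *
    have hM := hMpos (ν * p₀)
    calc Real.exp (-y) * b l ≤ Real.exp (-y) * (K * Real.exp x) :=
          mul_le_mul_of_nonneg_left h3 (Real.exp_pos _).le
      _ = K * Real.exp (x - y) := by rw [sub_eq_add_neg, Real.exp_add]; ring
      _ ≤ K * Real.exp (Real.log A - Real.log (L ^ (ν * p₀) * lam l ^ p₀ / Mk (ν * p₀))) := by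
          refine mul_le_mul_of_nonneg_left (Real.exp_le_exp.2 ?_) hK.le
          linarith
      _ = K * A * (Mk (ν * p₀) / L ^ (ν * p₀)) * (1 / lam l ^ p₀) := by
          rw [Real.exp_sub, Real.exp_log hA0, Real.exp_log (by positivity)]
          field_simp
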